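/- For correlated Erdős–Rényi random graphs (G_a, G_b) with structures S_a, S_b, the quantity (1/C(n,2)) log(1/P_{G_a|S_b}(G_a | S_b)) converges in probability to H(A|B) as n → ∞. -/

import Mathlib

open Finset Filter

namespace GraphSI

/-- A (weighted) graph on vertex set `Fin n` with marks in `α`, identified with the
function assigning a mark to each unordered pair of vertices. -/
abbrev Graph (n : ℕ) (α : Type*) := Sym2 (Fin n) → α

/-- Relabeling of the vertices of a graph by a permutation `π`:
the `(i,j)` entry of `π(g)` is the `(π⁻¹ i, π⁻¹ j)` entry of `g`. -/
def relabel {n : ℕ} {α : Type*} (π : Equiv.Perm (Fin n)) (g : Graph n α) : Graph n α :=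
  fun e => g (e.map π.symm)

/-- The unordered pairs `{i,j}` with `i ≠ j` (i.e. the pairs `i < j`). -/
def edgePairs (n : ℕ) : Finset (Sym2 (Fin n)) :=
  Finset.univ.filter (fun e => ¬ e.IsDiag)

/-- Joint probability of a pair of graphs under the correlated Erdős–Rényi model with
per-edge joint mark distribution `P`. -/
def cer {n : ℕ} {α β : Type*} (P : α × β → ℝ) (ga : Graph n α) (gb : Graph n β) : ℝ :=
  ∏ e ∈ edgePairs n, P (ga e, gb e)

/-- Probability of a graph under the Erdős–Rényi model with i.i.d. edge marks `P`. -/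
def erP {n : ℕ} {β : Type*} (P : β → ℝ) (g : Graph n β) : ℝ :=
  ∏ e ∈ edgePairs n, P (g e)

/-- Base-2 Shannon entropy of a pmf on a finite type (with the convention 0 log 0 = 0). -/
noncomputable def H2 {γ : Type*} [Fintype γ] (P : γ → ℝ) : ℝ :=
  ∑ x, P x * Real.logb 2 (P x)⁻¹

/-- Conditional entropy `H(A|B) = H(A,B) - H(B)` for a joint pmf on `α × β`. -/
noncomputable def condH {α β : Type*} [Fintype α] [Fintype β] (P : α × β → ℝ) : ℝ :=
  H2 P - H2 (fun b => ∑ a, P (a, b))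

/-- `C(n,2) = n(n-1)/2` as a real number. -/
def Cn2 (n : ℕ) : ℝ := n.choose 2

/-- Probability of an event under a pmf on a finite sample space. -/
noncomputable def prob {Ω : Type*} [Fintype Ω] (P : Ω → ℝ) (E : Set Ω) : ℝ :=
  ∑ ω, E.indicator P ω

/-- Maximum of a real-valued function over all permutations of `[n]`. -/
def maxPerm {n : ℕ} (f : Equiv.Perm (Fin n) → ℝ) : ℝ :=
  Finset.univ.sup' ⟨1, Finset.mem_univ 1⟩ f

instance {n : ℕ} {γ : Type*} [DecidableEq γ] (g : Graph n γ) :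
    DecidablePred (fun g' : Graph n γ => ∃ π : Equiv.Perm (Fin n), relabel π g = g') :=
  fun _ => Fintype.decidableExistsFintype

/-- Sum of `f` over the isomorphism class (the structure) of `g`. -/
def isoSum {n : ℕ} {γ : Type*} [Fintype γ] [DecidableEq γ]
    (f : Graph n γ → ℝ) (g : Graph n γ) : ℝ :=
  ∑ g' ∈ Finset.univ.filter
      (fun g' => ∃ π : Equiv.Perm (Fin n), relabel π g = g'), f g'

/-- Order of the automorphism group of `g`. -/
def autCard {n : ℕ} {γ : Type*} [DecidableEq γ] (g : Graph n γ) : ℕ :=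
  (Finset.univ.filter (fun π : Equiv.Perm (Fin n) => relabel π g = g)).card

lemma card_edge (n : ℕ) : (edgePairs n).card = n.choose 2 := by
  have h := Sym2.card_subtype_not_diag (α := Fin n)
  rw [Fintype.card_subtype, Fintype.card_fin] at h
  rw [← h, edgePairs]

lemma card_diag (n : ℕ) :
    (Finset.univ.filter (fun e : Sym2 (Fin n) => ¬ ¬ e.IsDiag)).card = n := by
  have h := Sym2.card_subtype_diag (α := Fin n)
  rw [Fintype.card_subtype, Fintype.card_fin] at h
  simpa using h

/-- Sum over all graphs of a product over the edges. -/
lemma sum_prod_edge {Y : Type*} [Fintype Y] [DecidableEq Y] (n : ℕ) (F : Sym2 (Fin n) → Y → ℝ) :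
    ∑ g : Graph n Y, ∏ e ∈ edgePairs n, F e (g e)
      = (Fintype.card Y : ℝ) ^ n * ∏ e ∈ edgePairs n, ∑ y, F e y := by
  classical
  have h := Finset.prod_univ_sum (fun _ : Sym2 (Fin n) => (Finset.univ : Finset Y))
    (fun e y => if ¬ e.IsDiag then F e y else (1 : ℝ))
  rw [Fintype.piFinset_univ] at h
  have h1 : ∀ g : Graph n Y, ∏ e, (if ¬ e.IsDiag then F e (g e) else (1 : ℝ))
      = ∏ e ∈ edgePairs n, F e (g e) := by
    intro g
    rw [edgePairs, Finset.prod_filter]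
  rw [Finset.sum_congr rfl (fun g _ => h1 g)] at h
  rw [← h, ← Finset.prod_filter_mul_prod_filter_not Finset.univ
    (fun e : Sym2 (Fin n) => ¬ e.IsDiag), mul_comm]
  congr 1
  · rw [Finset.prod_congr rfl (g := fun _ => (Fintype.card Y : ℝ))]
    · rw [Finset.prod_const, card_diag]
    · intro e he
      rw [Finset.mem_filter] at he
      simp [not_not.mp he.2]
  · apply Finset.prod_congr rfl
    intro e he
    rw [Finset.mem_filter] at he
    simp [he.2]

lemma sum_pair {α β : Type*} [Fintype α] [Fintype β] [DecidableEq α] [DecidableEq β]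
    (n : ℕ) (Q : α × β → ℝ) :
    ∑ p : Graph n α × Graph n β, ∏ e ∈ edgePairs n, Q (p.1 e, p.2 e)
      = (Fintype.card (α × β) : ℝ) ^ n * (∑ x, Q x) ^ (n.choose 2) := by
  have h := sum_prod_edge n (fun _ (y : α × β) => Q y)
  rw [Finset.prod_const, card_edge] at h
  rw [← h]
  exact (Fintype.sum_equiv (Equiv.arrowProdEquivProdArrow (Sym2 (Fin n)) (fun _ => α) (fun _ => β)) _ _
    (fun g => rfl)).symm

lemma exists_chernoff {Y : Type*} [Fintype Y] (P : Y → ℝ) (hP0 : ∀ x, 0 ≤ P x)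
    (hP1 : ∑ x, P x = 1) (f : Y → ℝ) (hf : ∑ x, P x * f x < 0) :
    ∃ t > 0, ∃ c > 0, ∑ x, P x * Real.exp (t * f x) ≤ Real.exp (-c) := by
  set d := -∑ x, P x * f x with hd
  have hdpos : 0 < d := by linarith
  set M := 1 + d + ∑ x, |f x| with hM
  have hs : 0 ≤ ∑ x, |f x| := Finset.sum_nonneg fun _ _ => abs_nonneg _
  have hMpos : 1 ≤ M := by linarith
  have hfM : ∀ x, |f x| ≤ M := fun x => by
    have := Finset.single_le_sum (f := fun x => |f x|) (fun _ _ => abs_nonneg _) (Finset.mem_univ x)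
    linarith
  have hMM : 0 < M ^ 2 := by positivity
  refine ⟨d / (2 * M ^ 2), by positivity, d ^ 2 / (4 * M ^ 2), by positivity, ?_⟩
  set t := d / (2 * M ^ 2) with ht
  have htpos : 0 < t := by positivity
  have htM : t * M ≤ 1 := by
    rw [ht, div_mul_eq_mul_div, div_le_one (by positivity)]
    nlinarith
  have hb : ∀ x, Real.exp (t * f x) ≤ 1 + t * f x + t ^ 2 * M ^ 2 := by
    intro x
    have h1 : |t * f x| ≤ 1 := by
      rw [abs_mul, abs_of_pos htpos]
      exact (mul_le_mul_of_nonneg_left (hfM x) htpos.le).trans htM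
    have h2 := Real.abs_exp_sub_one_sub_id_le h1
    have h3 := (abs_le.mp h2).2
    have h4 : (t * f x) ^ 2 ≤ t ^ 2 * M ^ 2 := by
      rw [mul_pow, ← sq_abs (f x)]
      have := hfM x
      gcongr
    linarith
  have h5 : ∑ x, P x * Real.exp (t * f x) ≤ ∑ x, (P x + t * (P x * f x) + P x * (t ^ 2 * M ^ 2)) := by
    apply Finset.sum_le_sum
    intro x _
    have := mul_le_mul_of_nonneg_left (hb x) (hP0 x)
    linarith
  rw [Finset.sum_add_distrib, Finset.sum_add_distrib, ← Finset.mul_sum, ← Finset.sum_mul, hP1] at h5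
  have h6 : 1 + t * (∑ x, P x * f x) + 1 * (t ^ 2 * M ^ 2) = 1 - d ^ 2 / (4 * M ^ 2) := by
    have : ∑ x, P x * f x = -d := by rw [hd]; ring
    rw [this, ht]
    field_simp
    ring
  rw [h6] at h5
  have := Real.add_one_le_exp (-(d ^ 2 / (4 * M ^ 2)))
  linarith

lemma cer_nonneg {α β : Type*} (P : α × β → ℝ) (hP0 : ∀ x, 0 ≤ P x) {n : ℕ}
    (ga : Graph n α) (gb : Graph n β) : 0 ≤ cer P ga gb :=
  Finset.prod_nonneg fun _ _ => hP0 _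

lemma prob_le {Ω : Type*} [Fintype Ω] (Q R : Ω → ℝ) (E : Set Ω) (hR : ∀ ω, 0 ≤ R ω)
    (h : ∀ ω ∈ E, Q ω ≤ R ω) : prob Q E ≤ ∑ ω, R ω := by
  apply Finset.sum_le_sum
  intro ω _
  by_cases hω : ω ∈ E
  · rw [Set.indicator_of_mem hω]; exact h ω hω
  · rw [Set.indicator_of_notMem hω]; exact hR ω

lemma chernoff {α β : Type*} [Fintype α] [Fintype β] [DecidableEq α] [DecidableEq β]
    (P : α × β → ℝ) (hP0 : ∀ x, 0 ≤ P x) (hP1 : ∑ x, P x = 1)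
    (f : α × β → ℝ) (hf : ∑ x, P x * f x < 0) :
    ∃ c > 0, ∀ n : ℕ, prob (fun p : Graph n α × Graph n β => cer P p.1 p.2)
      {p | 0 ≤ ∑ e ∈ edgePairs n, f (p.1 e, p.2 e)}
      ≤ (Fintype.card (α × β) : ℝ) ^ n * Real.exp (-(c * (n.choose 2 : ℕ))) := by
  obtain ⟨t, ht, c, hc, h⟩ := exists_chernoff P hP0 hP1 f hf
  refine ⟨c, hc, fun n => ?_⟩
  have h1 := sum_pair n (fun x => P x * Real.exp (t * f x))
  refine (prob_le _ (fun p => ∏ e ∈ edgePairs n,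
    (P (p.1 e, p.2 e) * Real.exp (t * f (p.1 e, p.2 e)))) _ ?_ ?_).trans ?_
  · intro p
    exact Finset.prod_nonneg fun _ _ => mul_nonneg (hP0 _) (Real.exp_pos _).le
  · intro p hp
    rw [Finset.prod_mul_distrib, ← Real.exp_sum, ← Finset.mul_sum]
    exact le_mul_of_one_le_right (cer_nonneg P hP0 _ _) (Real.one_le_exp (mul_nonneg ht.le hp))
  · rw [h1]
    have h2 : Real.exp (-(c * (n.choose 2 : ℕ))) = Real.exp (-c) ^ (n.choose 2) := by
      rw [← Real.exp_nat_mul]; congr 1; ring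
    rw [h2]
    have : 0 ≤ ∑ x, P x * Real.exp (t * f x) :=
      Finset.sum_nonneg fun x _ => mul_nonneg (hP0 _) (Real.exp_pos _).le
    gcongr

lemma relabel_bij {n : ℕ} {γ : Type*} (π : Equiv.Perm (Fin n)) :
    Function.Bijective (relabel π : Graph n γ → Graph n γ) := by
  refine Function.bijective_iff_has_inverse.mpr ⟨relabel π.symm, ?_, ?_⟩
  · intro g; funext e; simp [relabel, Sym2.map_map]
  · intro g; funext e; simp [relabel, Sym2.map_map]

lemma isoSum_le {n : ℕ} {γ : Type*} [Fintype γ] [DecidableEq γ]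
    (f : Graph n γ → ℝ) (hf : ∀ g, 0 ≤ f g) (g : Graph n γ) :
    isoSum f g ≤ ∑ π : Equiv.Perm (Fin n), f (relabel π g) := by
  have : Finset.univ.filter (fun g' => ∃ π : Equiv.Perm (Fin n), relabel π g = g')
      = Finset.univ.image (fun π : Equiv.Perm (Fin n) => relabel π g) := by
    ext g'; simp
  rw [isoSum, this]
  exact Finset.sum_image_le_of_nonneg (fun _ _ => hf _)

lemma le_isoSum {n : ℕ} {γ : Type*} [Fintype γ] [DecidableEq γ]
    (f : Graph n γ → ℝ) (hf : ∀ g, 0 ≤ f g) (g : Graph n γ) :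
    f g ≤ isoSum f g := by
  apply Finset.single_le_sum (fun g' _ => hf g')
  simp only [Finset.mem_filter, Finset.mem_univ, true_and]
  refine ⟨1, ?_⟩
  funext e
  have : (⇑(Equiv.symm (1 : Equiv.Perm (Fin n))) : Fin n → Fin n) = id := rfl
  simp [relabel, this]

lemma erP_relabel {n : ℕ} {β : Type*} (Q : β → ℝ) (π : Equiv.Perm (Fin n)) (g : Graph n β) :
    erP Q (relabel π g) = erP Q g := by
  unfold erP
  have hb : Function.Bijective (Sym2.map π.symm) := by
    refine Function.bijective_iff_has_inverse.mpr ⟨Sym2.map π, ?_, ?_⟩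
    · intro e; simp [Sym2.map_map]
    · intro e; simp [Sym2.map_map]
  refine Finset.prod_bijective (Sym2.map π.symm) hb ?_ ?_
  · intro e
    simp only [edgePairs, Finset.mem_filter, Finset.mem_univ, true_and]
    induction e with
    | _ a b => simp
  · intro e _
    rfl

lemma sum_cer {n : ℕ} {α β : Type*} [Fintype α] [DecidableEq α] (P : α × β → ℝ)
    (gb : Graph n β) : ∑ ga : Graph n α, cer P ga gb
      = (Fintype.card α : ℝ) ^ n * erP (fun b => ∑ a, P (a, b)) gb :=
  sum_prod_edge n (fun e a => P (a, gb e))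

lemma bad_le {α β : Type*} [Fintype α] [Fintype β] [DecidableEq α] [DecidableEq β]
    (P : α × β → ℝ) (hP0 : ∀ x, 0 ≤ P x) (hP1 : ∑ x, P x = 1) (n : ℕ) (c : ℝ) :
    prob (fun p : Graph n α × Graph n β => cer P p.1 p.2)
      {p | Real.exp (c * (n.choose 2 : ℕ)) * cer P p.1 p.2
        ≤ isoSum (fun gb' => cer P p.1 gb') p.2}
      ≤ (Fintype.card (α × β) : ℝ) ^ n * n.factorial * Real.exp (-(c * (n.choose 2 : ℕ))) := by
  refine (prob_le _ (fun p => Real.exp (-(c * (n.choose 2 : ℕ))) *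
    ∑ π : Equiv.Perm (Fin n), cer P p.1 (relabel π p.2)) _ ?_ ?_).trans ?_
  · intro p
    exact mul_nonneg (Real.exp_pos _).le (Finset.sum_nonneg fun _ _ => cer_nonneg P hP0 _ _)
  · intro p hp
    have h1 := isoSum_le (fun gb' => cer P p.1 gb') (fun _ => cer_nonneg P hP0 _ _) p.2
    have h2 := mul_le_mul_of_nonneg_left (le_trans hp h1) (Real.exp_pos (-(c * (n.choose 2 : ℕ)))).le
    rw [← mul_assoc, ← Real.exp_add, neg_add_cancel, Real.exp_zero, one_mul] at h2
    exact h2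
  · rw [← Finset.mul_sum, Finset.sum_comm]
    have h3 : ∀ π : Equiv.Perm (Fin n),
        ∑ p : Graph n α × Graph n β, cer P p.1 (relabel π p.2)
          = (Fintype.card (α × β) : ℝ) ^ n := by
      intro π
      have h4 := sum_pair n P
      rw [hP1, one_pow, mul_one] at h4
      rw [← h4]
      exact Fintype.sum_bijective (Prod.map id (relabel π))
        (Function.bijective_id.prodMap (relabel_bij π)) _ _ (fun p => rfl)
    rw [Finset.sum_congr rfl (fun π _ => h3 π), Finset.sum_const, Finset.card_univ,
      Fintype.card_perm, Fintype.card_fin, nsmul_eq_mul]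
    apply le_of_eq; ring

lemma tendsto_main (K c : ℝ) (hK : 0 ≤ K) (hc : 0 < c) :
    Tendsto (fun n : ℕ => K ^ n * n.factorial * Real.exp (-(c * (n.choose 2 : ℕ)))) atTop (nhds 0) := by
  have h1 : Tendsto (fun n : ℕ => K * n * Real.exp (-(c / 2 * ((n : ℝ) - 1)))) atTop (nhds 0) := by
    have h := Real.tendsto_pow_mul_exp_neg_atTop_nhds_zero 1
    have h2 : Tendsto (fun n : ℕ => c / 2 * (n : ℝ)) atTop atTop :=
      Tendsto.const_mul_atTop (by positivity) tendsto_natCast_atTop_atTop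
    have h3 := (h.comp h2).const_mul (K * (2 / c) * Real.exp (c / 2))
    rw [mul_zero] at h3
    refine h3.congr fun n => ?_
    simp only [Function.comp]
    have : -(c / 2 * ((n : ℝ) - 1)) = c / 2 + -(c / 2 * n) := by ring
    rw [this, Real.exp_add]
    field_simp
  have h2 : ∀ᶠ n : ℕ in atTop, K * n * Real.exp (-(c / 2 * ((n : ℝ) - 1))) ≤ 1 / 2 :=
    h1.eventually_le_const (by norm_num)
  have h3 : Tendsto (fun n : ℕ => (1 / 2 : ℝ) ^ n) atTop (nhds 0) :=
    tendsto_pow_atTop_nhds_zero_of_lt_one (by norm_num) (by norm_num)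
  refine tendsto_of_tendsto_of_tendsto_of_le_of_le' tendsto_const_nhds h3 ?_ ?_
  · exact Eventually.of_forall fun n => by positivity
  · filter_upwards [h2] with n hn
    refine le_trans ?_ (pow_le_pow_left₀ (by positivity) hn n)
    rw [mul_pow, mul_pow, ← Real.exp_nat_mul]
    have h4 : (n.factorial : ℝ) ≤ (n : ℝ) ^ n := by exact_mod_cast Nat.factorial_le_pow n
    have h5 : -(c * (n.choose 2 : ℕ)) = (n : ℝ) * -(c / 2 * ((n : ℝ) - 1)) := by
      rw [Nat.cast_choose_two]; ring
    rw [h5]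
    gcongr

lemma mean_eq {α β : Type*} [Fintype α] [Fintype β] (P : α × β → ℝ) :
    ∑ x : α × β, P x * (Real.logb 2 (∑ a, P (a, x.2)) - Real.logb 2 (P x)) = condH P := by
  have h : ∑ x : α × β, P x * Real.logb 2 (∑ a, P (a, x.2))
      = ∑ b, (∑ a, P (a, b)) * Real.logb 2 (∑ a, P (a, b)) := by
    rw [Fintype.sum_prod_type_right]
    simp only [Finset.sum_mul]
  simp only [condH, H2, Real.logb_inv, mul_sub, Finset.sum_sub_distrib, h, mul_neg,
    Finset.sum_neg_distrib]
  ring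

/-- Deterministic estimate on the support. -/
lemma det_bound {α β : Type*} [Fintype α] [Fintype β] [DecidableEq α] [DecidableEq β]
    (P : α × β → ℝ) (hP0 : ∀ x, 0 ≤ P x) (n : ℕ)
    (ga : Graph n α) (gb : Graph n β) (hpos : 0 < cer P ga gb) (hα : 1 ≤ Fintype.card α)
    (s : ℝ) (hs : isoSum (fun gb' => cer P ga gb') gb ≤ (2 : ℝ) ^ s * cer P ga gb) :
    ∃ L R : ℝ,
      L = ∑ e ∈ edgePairs n,
        (Real.logb 2 (∑ a, P (a, gb e)) - Real.logb 2 (P (ga e, gb e))) ∧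
      R = Real.logb 2 (isoSum (fun gb' => cer P ga gb') gb /
          isoSum (fun gb' => ∑ ga' : Graph n α, cer P ga' gb') gb)⁻¹ ∧
      L - s ≤ R ∧ R ≤ L + Real.logb 2 ((Fintype.card α : ℝ) ^ n * n.factorial) := by
  refine ⟨_, _, rfl, rfl, ?_⟩
  set Q : β → ℝ := fun b => ∑ a, P (a, b) with hQ
  have hPne : ∀ e ∈ edgePairs n, P (ga e, gb e) ≠ 0 := Finset.prod_ne_zero_iff.mp hpos.ne'
  have hQpos : ∀ e ∈ edgePairs n, 0 < Q (gb e) := fun e he =>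
    lt_of_lt_of_le (lt_of_le_of_ne (hP0 _) (hPne e he).symm)
      (Finset.single_le_sum (f := fun a => P (a, gb e)) (fun _ _ => hP0 _) (Finset.mem_univ (ga e)))
  have hE : 0 < erP Q gb := Finset.prod_pos hQpos
  have hL : ∑ e ∈ edgePairs n,
        (Real.logb 2 (∑ a, P (a, gb e)) - Real.logb 2 (P (ga e, gb e)))
      = Real.logb 2 (erP Q gb) - Real.logb 2 (cer P ga gb) := by
    rw [Finset.sum_sub_distrib, erP, cer, Real.logb_prod _ _ (fun e he => (hQpos e he).ne'),
      Real.logb_prod _ _ hPne]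
  rw [hL]
  have hnum1 := le_isoSum (fun gb' => cer P ga gb') (fun _ => cer_nonneg P hP0 _ _) gb
  have hnumpos := lt_of_lt_of_le hpos hnum1
  set num := isoSum (fun gb' => cer P ga gb') gb
  set den := isoSum (fun gb' => ∑ ga' : Graph n α, cer P ga' gb') gb with hden
  have hc1 : (1 : ℝ) ≤ (Fintype.card α : ℝ) ^ n := one_le_pow₀ (by exact_mod_cast hα)
  have hnn : ∀ g : Graph n β, 0 ≤ ∑ ga' : Graph n α, cer P ga' g := fun g =>
    Finset.sum_nonneg fun _ _ => cer_nonneg P hP0 _ _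
  have hden1 : erP Q gb ≤ den := by
    refine le_trans ?_ (le_isoSum _ hnn gb)
    rw [sum_cer]
    exact le_mul_of_one_le_left hE.le hc1
  have hden2 : den ≤ (Fintype.card α : ℝ) ^ n * n.factorial * erP Q gb := by
    refine (isoSum_le _ hnn gb).trans (le_of_eq ?_)
    simp only [sum_cer]
    rw [Finset.sum_congr rfl (fun π _ => by rw [erP_relabel]), Finset.sum_const, Finset.card_univ,
      Fintype.card_perm, Fintype.card_fin, nsmul_eq_mul]
    ring
  have hdenpos := lt_of_lt_of_le hE hden1
  rw [inv_div, Real.logb_div hdenpos.ne' hnumpos.ne']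
  have b2 : (1 : ℝ) < 2 := by norm_num
  have l1 := Real.logb_le_logb_of_le b2 hpos hnum1
  have l2 := Real.logb_le_logb_of_le b2 hnumpos hs
  have l3 := Real.logb_le_logb_of_le b2 hE hden1
  have l4 := Real.logb_le_logb_of_le b2 hdenpos hden2
  have hf : (0 : ℝ) < n.factorial := by exact_mod_cast n.factorial_pos
  rw [Real.logb_mul (by positivity) hpos.ne', Real.logb_rpow (by norm_num) (by norm_num)] at l2
  rw [Real.logb_mul (by positivity) hE.ne'] at l4
  constructor <;> linarith

lemma prob_union3 {Ω : Type*} [Fintype Ω] (Q : Ω → ℝ) (hQ : ∀ ω, 0 ≤ Q ω) (E A B C : Set Ω)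
    (h : ∀ ω ∈ E, 0 < Q ω → ω ∈ A ∨ ω ∈ B ∨ ω ∈ C) :
    prob Q E ≤ prob Q A + prob Q B + prob Q C := by
  unfold prob
  rw [← Finset.sum_add_distrib, ← Finset.sum_add_distrib]
  apply Finset.sum_le_sum
  intro ω _
  have hA := Set.indicator_nonneg (s := A) (fun x _ => hQ x) ω
  have hB := Set.indicator_nonneg (s := B) (fun x _ => hQ x) ω
  have hC := Set.indicator_nonneg (s := C) (fun x _ => hQ x) ω
  by_cases hE : ω ∈ E
  · rw [Set.indicator_of_mem hE]
    rcases (hQ ω).eq_or_lt with h0 | h0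
    · linarith
    · rcases h ω hE h0 with h1 | h1 | h1
      · have := Set.indicator_of_mem h1 Q; linarith
      · have := Set.indicator_of_mem h1 Q; linarith
      · have := Set.indicator_of_mem h1 Q; linarith
  · rw [Set.indicator_of_notMem hE]; linarith

/-- `C(n,2)⁻¹ log(1/P_{Gₐ|S_b}(Gₐ|S_b)) → H(A|B)` in probability under the
CER model, where `P_{Gₐ|S_b}` is the conditional probability of the labelled graph `Gₐ`
given the structure `S_b` of `G_b`. -/
theorem stmt9 {α β : Type*} [Fintype α] [Fintype β] [DecidableEq α] [DecidableEq β]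
    (P : α × β → ℝ) (hP0 : ∀ x, 0 ≤ P x) (hP1 : ∑ x, P x = 1) :
    ∀ δ : ℝ, 0 < δ →
      Filter.Tendsto (fun n : ℕ =>
          prob (fun p : Graph n α × Graph n β => cer P p.1 p.2)
            {p : Graph n α × Graph n β |
              δ < |(Cn2 n)⁻¹ * Real.logb 2
                  (isoSum (fun gb' => cer P p.1 gb') p.2 /
                    isoSum (fun gb' => ∑ ga' : Graph n α, cer P ga' gb') p.2)⁻¹ -
                condH P|})
        Filter.atTop (nhds 0) := by
  intro δ hδ
  have hne : Nonempty (α × β) := by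
    by_contra hcon
    rw [not_nonempty_iff] at hcon
    simp at hP1
  have hα : 1 ≤ Fintype.card α := Fintype.card_pos_iff.mpr ⟨hne.some.1⟩
  set X : α × β → ℝ := fun x => Real.logb 2 (∑ a, P (a, x.2)) - Real.logb 2 (P x) with hX
  have hmean : ∑ x, P x * X x = condH P := mean_eq P
  obtain ⟨c₁, hc₁, h₁⟩ := chernoff P hP0 hP1 (fun x => X x - (condH P + δ / 2)) (by
    simp only [mul_sub, Finset.sum_sub_distrib, hmean, ← Finset.sum_mul, hP1]
    linarith)
  obtain ⟨c₂, hc₂, h₂⟩ := chernoff P hP0 hP1 (fun x => (condH P - δ / 2) - X x) (by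
    simp only [mul_sub, Finset.sum_sub_distrib, hmean, ← Finset.sum_mul, hP1]
    linarith)
  have hlog2 : 0 < Real.log 2 := Real.log_pos (by norm_num)
  set c₃ := Real.log 2 * (δ / 2) with hc₃
  have hc₃pos : 0 < c₃ := by positivity
  set K : ℝ := (Fintype.card (α × β) : ℝ) with hK
  have hK0 : 0 ≤ K := Nat.cast_nonneg _
  have T := ((tendsto_main K c₁ hK0 hc₁).add (tendsto_main K c₂ hK0 hc₂)).add
    (tendsto_main K c₃ hK0 hc₃pos)
  rw [add_zero, add_zero] at T
  have hcer : ∀ (n : ℕ) (p : Graph n α × Graph n β), 0 ≤ cer P p.1 p.2 :=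
    fun n p => cer_nonneg P hP0 _ _
  have T1 : ∀ᶠ n : ℕ in atTop, (Fintype.card α : ℝ) ^ n * n.factorial *
      Real.exp (-(c₃ * (n.choose 2 : ℕ))) ≤ 1 :=
    (tendsto_main _ c₃ (Nat.cast_nonneg _) hc₃pos).eventually_le_const (by norm_num)
  refine tendsto_of_tendsto_of_tendsto_of_le_of_le' tendsto_const_nhds T ?_ ?_
  · exact Eventually.of_forall fun n => Finset.sum_nonneg fun p _ =>
      Set.indicator_nonneg (fun x _ => hcer n x) p
  · filter_upwards [T1, eventually_ge_atTop 2] with n hn hn2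
    have hf : (1 : ℝ) ≤ n.factorial := by exact_mod_cast n.factorial_pos
    have hkk : ∀ c : ℝ, K ^ n * Real.exp (-(c * (n.choose 2 : ℕ)))
        ≤ K ^ n * n.factorial * Real.exp (-(c * (n.choose 2 : ℕ))) := by
      intro c
      have : K ^ n ≤ K ^ n * n.factorial := le_mul_of_one_le_right (by positivity) hf
      gcongr
    refine le_trans ?_ (add_le_add (add_le_add ((h₁ n).trans (hkk c₁)) ((h₂ n).trans (hkk c₂)))
      (bad_le P hP0 hP1 n c₃))
    apply prob_union3 _ (hcer n)
    rintro ⟨ga, gb⟩ hE hpos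
    simp only [Set.mem_ofPred_eq] at hE hpos ⊢
    by_contra hcon
    push Not at hcon
    obtain ⟨e1, e2, e3⟩ := hcon
    set m : ℝ := ((n.choose 2 : ℕ) : ℝ) with hm
    have hmpos : 0 < m := by
      rw [hm]; exact_mod_cast Nat.choose_pos hn2
    have hexp : Real.exp (c₃ * m) = (2 : ℝ) ^ (δ / 2 * m) := by
      rw [Real.rpow_def_of_pos (by norm_num), hc₃]; congr 1; ring
    rw [hexp] at e3
    obtain ⟨L, R, hL, hR, b1, b2⟩ := det_bound P hP0 n ga gb hpos hα _ e3.le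
    rw [← hR] at hE
    have hL' : L = ∑ e ∈ edgePairs n, X (ga e, gb e) := hL
    rw [Finset.sum_sub_distrib, Finset.sum_const, card_edge, nsmul_eq_mul, ← hL'] at e1 e2
    have b3 : Real.logb 2 ((Fintype.card α : ℝ) ^ n * n.factorial) ≤ δ / 2 * m := by
      have hc1 : (1 : ℝ) ≤ (Fintype.card α : ℝ) ^ n := one_le_pow₀ (by exact_mod_cast hα)
      rw [Real.logb_le_iff_le_rpow (by norm_num) (by positivity), ← hexp]
      rw [Real.exp_neg, ← div_eq_mul_inv, div_le_one (Real.exp_pos _)] at hn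
      exact hn
    have hC : Cn2 n = m := rfl
    rw [hC] at hE
    have hRR : |m⁻¹ * R - condH P| ≤ δ := by
      have hq : m⁻¹ * R - condH P = (R - m * condH P) / m := by field_simp
      rw [hq, abs_div, abs_of_pos hmpos, div_le_iff₀ hmpos, abs_le]
      constructor <;> nlinarith
    linarith

end GraphSI
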